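/- Let k be a field, i,j ≥ 1 natural numbers, and a, b ∈ k. Let S(k;i,j,a,b) be the quotient of R(k;i,j) by the two-sided ideal generated by x² − a·x + b. Then either S(k;i,j,a,b) is the trivial (zero) ring, or S(k;i,j,a,b) is isomorphic as a k-algebra to M₂(k). -/

import Mathlib

/-- The defining relations for `R(A;i,j)`: `x^i*y + y*x^j = 1` and `y^2 = 0`,
where `x` and `y` are the two generators of the free algebra. -/
inductive MatRel (A : Type*) [CommRing A] (i j : ℕ) :
    FreeAlgebra A (Fin 2) → FreeAlgebra A (Fin 2) → Prop
  | rel1 : MatRel A i j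
      (FreeAlgebra.ι A (0 : Fin 2) ^ i * FreeAlgebra.ι A (1 : Fin 2) +
        FreeAlgebra.ι A (1 : Fin 2) * FreeAlgebra.ι A (0 : Fin 2) ^ j) 1
  | rel2 : MatRel A i j (FreeAlgebra.ι A (1 : Fin 2) ^ 2) 0

/-- `R(A;i,j)`, the quotient of the free `A`-algebra on `x, y` by the two-sided ideal
generated by `x^i*y + y*x^j - 1` and `y^2`. -/
abbrev MatRing (A : Type*) [CommRing A] (i j : ℕ) : Type _ := RingQuot (MatRel A i j)

/-- The image of the generator `x` in `R(A;i,j)`. -/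
noncomputable def Xgen (A : Type*) [CommRing A] (i j : ℕ) : MatRing A i j :=
  RingQuot.mkAlgHom A (MatRel A i j) (FreeAlgebra.ι A (0 : Fin 2))

/-- The image of the generator `y` in `R(A;i,j)`. -/
noncomputable def Ygen (A : Type*) [CommRing A] (i j : ℕ) : MatRing A i j :=
  RingQuot.mkAlgHom A (MatRel A i j) (FreeAlgebra.ι A (1 : Fin 2))

/-- The extra relation `x^2 - a*x + b = 0` imposed on `R(k;i,j)`. -/
inductive SRel (k : Type*) [Field k] (i j : ℕ) (a b : k) :
    MatRing k i j → MatRing k i j → Prop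
  | rel : SRel k i j a b
      (Xgen k i j ^ 2 - a • Xgen k i j + algebraMap k (MatRing k i j) b) 0

/-- `S(k;i,j,a,b)`, the quotient of `R(k;i,j)` by the two-sided ideal
generated by `x^2 - a*x + b`. -/
abbrev SRing (k : Type*) [Field k] (i j : ℕ) (a b : k) : Type _ :=
  RingQuot (SRel k i j a b)

/-- Elements `y`, `z` of square zero with `y * z + z * y = 1` determine a homomorphism from
the algebra of `2 × 2` matrices, sending the off-diagonal matrix units to `y` and `z`. -/
noncomputable def matrixTwoLift {k A : Type*} [Field k] [Ring A] [Algebra k A] (y z : A)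
    (hy : y * y = 0) (hz : z * z = 0) (hyz : y * z + z * y = 1) :
    Matrix (Fin 2) (Fin 2) k →ₐ[k] A :=
  AlgHom.ofLinearMap
    { toFun := fun M => M 0 0 • (y * z) + M 0 1 • y + M 1 0 • z + M 1 1 • (z * y)
      map_add' := fun M N => by simp only [Matrix.add_apply, add_smul]; abel
      map_smul' := fun c M => by
        simp only [Matrix.smul_apply, smul_eq_mul, mul_smul, smul_add, RingHom.id_apply] }
    (by simpa using hyz)
    (fun M N => by
      have hyzy : y * (z * y) = y := by
        rw [eq_sub_of_add_eq' hyz, mul_sub, ← mul_assoc y y, hy, zero_mul, mul_one, sub_zero]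
      have hzyz : z * (y * z) = z := by
        rw [eq_sub_of_add_eq hyz, mul_sub, ← mul_assoc z z, hz, zero_mul, mul_one, sub_zero]
      have hyy (w : A) : y * (y * w) = 0 := by rw [← mul_assoc, hy, zero_mul]
      have hzz (w : A) : z * (z * w) = 0 := by rw [← mul_assoc, hz, zero_mul]
      simp only [LinearMap.coe_mk, AddHom.coe_mk, Matrix.mul_apply, Fin.sum_univ_two, mul_add,
        add_mul, smul_mul_assoc, mul_smul_comm, mul_assoc, hy, hz, hyy, hzz, hyzy, hzyz,
        mul_zero, smul_zero]
      module)

lemma matrixTwoLift_apply {k A : Type*} [Field k] [Ring A] [Algebra k A] (y z : A)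
    (hy : y * y = 0) (hz : z * z = 0) (hyz : y * z + z * y = 1)
    (M : Matrix (Fin 2) (Fin 2) k) :
    matrixTwoLift y z hy hz hyz M =
      M 0 0 • (y * z) + M 0 1 • y + M 1 0 • z + M 1 1 • (z * y) := rfl

lemma exists_pow_eq_smul_add {k A : Type*} [Field k] [Ring A] [Algebra k A] {a b : k} {x : A}
    (hx : x * x = a • x - b • (1 : A)) (n : ℕ) :
    ∃ p q : k, x ^ n = p • x + q • (1 : A) := by
  induction n with
  | zero => exact ⟨0, 1, by simp⟩
  | succ n ih =>
    obtain ⟨p, q, h⟩ := ih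
    refine ⟨p * a + q, -(p * b), ?_⟩
    rw [pow_succ, h, add_mul, smul_mul_assoc, hx, smul_mul_assoc, one_mul]
    module

/-- In a nontrivial algebra, the defining relations of `S(k;i,j,a,b)` force
`x * y + y * x = c + a * y` for some nonzero scalar `c`. -/
lemma exists_anticommutator_eq {k A : Type*} [Field k] [Ring A] [Algebra k A] [Nontrivial A]
    {i j : ℕ} {a b : k} {x y : A} (hx : x * x = a • x - b • (1 : A)) (hy : y * y = 0)
    (hxy : x ^ i * y + y * x ^ j = 1) :
    ∃ c : k, c ≠ 0 ∧ x * y + y * x = c • (1 : A) + a • y := by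
  obtain ⟨p, q, hp⟩ := exists_pow_eq_smul_add hx i
  obtain ⟨r, s, hr⟩ := exists_pow_eq_smul_add hx j
  have hyy (w : A) : y * (y * w) = 0 := by rw [← mul_assoc, hy, zero_mul]
  have hrel : p • (x * y) + r • (y * x) + (q + s) • y = 1 := by
    rw [← hxy, hp, hr]
    simp only [add_mul, mul_add, smul_mul_assoc, mul_smul_comm, one_mul, mul_one]
    module
  have hy0 : y ≠ 0 := by
    rintro rfl
    simp at hxy
  have hl : p • (y * (x * y)) = y := by
    have h := congrArg (y * ·) hrel
    simpa [mul_add, mul_smul_comm, hy, hyy] using h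
  have hr' : r • (y * (x * y)) = y := by
    have h := congrArg (· * y) hrel
    simpa [add_mul, smul_mul_assoc, mul_assoc, hy] using h
  have hyxy : y * (x * y) ≠ 0 := fun h => hy0 (by rw [← hl, h, smul_zero])
  have hp0 : p ≠ 0 := by
    rintro rfl
    exact hy0 (by rw [← hl, zero_smul])
  obtain rfl : p = r := smul_left_injective k hyxy (hl.trans hr'.symm)
  have hanti : x * y + y * x = p⁻¹ • (1 : A) + (-(p⁻¹ * (q + s))) • y := by
    rw [← hrel]
    simp only [smul_add, smul_smul, inv_mul_cancel₀ hp0]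
    module
  refine ⟨p⁻¹, inv_ne_zero hp0, ?_⟩
  generalize -(p⁻¹ * (q + s)) = t at hanti
  have hcomm : (a - t) • (x * y - y * x) = 0 := by
    have h1 : x * (x * y + y * x) - (x * y + y * x) * x = a • (x * y - y * x) := by
      calc _ = x * x * y - y * (x * x) := by noncomm_ring
        _ = _ := by
          rw [hx]
          simp only [sub_mul, mul_sub, smul_mul_assoc, mul_smul_comm, one_mul, mul_one]
          module
    rw [hanti] at h1
    simp only [add_mul, mul_add, smul_mul_assoc, mul_smul_comm, one_mul, mul_one] at h1
    rw [sub_smul, ← h1]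
    module
  rcases smul_eq_zero.mp hcomm with h | h
  · rwa [← sub_eq_zero.mp h] at hanti
  · exact absurd (by rw [sub_eq_zero.mp h, hyy]) hyxy

/-- A nontrivial algebra generated by elements satisfying the relations of `S(k;i,j,a,b)` is
the algebra of `2 × 2` matrices. -/
lemma nonempty_algEquiv_matrix {k A : Type*} [Field k] [Ring A] [Algebra k A] [Nontrivial A]
    {i j : ℕ} {a b : k} {x y : A} (hx : x * x = a • x - b • (1 : A)) (hy : y * y = 0)
    (hxy : x ^ i * y + y * x ^ j = 1) (hgen : Algebra.adjoin k {x, y} = ⊤) :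
    Nonempty (A ≃ₐ[k] Matrix (Fin 2) (Fin 2) k) := by
  obtain ⟨c, hc, hanti⟩ := exists_anticommutator_eq hx hy hxy
  have hxy' : x * y = c • (1 : A) + a • y - y * x := eq_sub_of_add_eq hanti
  have hyy (w : A) : y * (y * w) = 0 := by rw [← mul_assoc, hy, zero_mul]
  have hxyw (w : A) : x * (y * w) = c • w + a • (y * w) - y * (x * w) := by
    rw [← mul_assoc, hxy', sub_mul, add_mul, smul_mul_assoc, smul_mul_assoc, one_mul, mul_assoc]
  set z : A := c⁻¹ • x - (c⁻¹ * a) • (1 : A) + (c⁻¹ * c⁻¹ * a) • (y * x)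
    + (c⁻¹ * c⁻¹ * (b - a * a)) • y with hzdef
  have hyz' : y * z = c⁻¹ • (y * x) - (c⁻¹ * a) • y := by
    simp only [hzdef, mul_add, mul_sub, mul_smul_comm, hy, hyy, mul_one]
    module
  have hzy' : z * y = (1 : A) - c⁻¹ • (y * x) + (c⁻¹ * a) • y := by
    simp only [hzdef, add_mul, sub_mul, smul_mul_assoc, mul_assoc, hy, hxy', mul_add, mul_sub,
      mul_smul_comm, hyy, mul_one, one_mul]
    match_scalars <;> field_simp; ring
  have hz : z * z = 0 := by
    simp only [hzdef, add_mul, sub_mul, smul_mul_assoc, mul_assoc, hy, hx, hxy', hxyw,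
      mul_add, mul_sub, mul_smul_comm, hyy, mul_one, one_mul]
    match_scalars <;> field_simp <;> ring
  have hyz : y * z + z * y = 1 := by rw [hyz', hzy']; module
  let f := matrixTwoLift (k := k) y z hy hz hyz
  have hf : Function.Surjective f := by
    rw [← AlgHom.range_eq_top, eq_top_iff, ← hgen, Algebra.adjoin_le_iff]
    rintro w (rfl | rfl)
    · refine ⟨!![0, -(c⁻¹ * b); c, a], ?_⟩
      change matrixTwoLift y z hy hz hyz _ = _
      rw [matrixTwoLift_apply, hzy']
      simp [hzdef]
      match_scalars <;> field_simp <;> ring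
    · refine ⟨!![0, 1; 0, 0], ?_⟩
      change matrixTwoLift w z hy hz hyz _ = _
      simp [matrixTwoLift_apply]
  exact ⟨(AlgEquiv.ofBijective f ⟨f.toRingHom.injective, hf⟩).symm⟩

lemma adjoin_Xgen_Ygen (k : Type*) [CommRing k] (i j : ℕ) :
    Algebra.adjoin k {Xgen k i j, Ygen k i j} = ⊤ := by
  have himage : ({Xgen k i j, Ygen k i j} : Set (MatRing k i j)) =
      RingQuot.mkAlgHom k (MatRel k i j) '' Set.range (FreeAlgebra.ι k) := by
    ext w
    simp [Xgen, Ygen, Fin.exists_fin_two, eq_comm]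
  rw [himage, ← AlgHom.map_adjoin, FreeAlgebra.adjoin_range_ι, Algebra.map_top,
    AlgHom.range_eq_top]
  exact RingQuot.mkAlgHom_surjective k _

theorem stmt16 (k : Type*) [Field k] (i j : ℕ) (hi : 1 ≤ i) (hj : 1 ≤ j) (a b : k) :
    Subsingleton (SRing k i j a b) ∨
      Nonempty (SRing k i j a b ≃ₐ[k] Matrix (Fin 2) (Fin 2) k) := by
  rcases subsingleton_or_nontrivial (SRing k i j a b) with h | h
  · exact Or.inl h
  right
  let π := RingQuot.mkAlgHom k (SRel k i j a b)
  have hx : π (Xgen k i j ^ 2 - a • Xgen k i j + algebraMap k (MatRing k i j) b) = π 0 :=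
    RingQuot.mkAlgHom_rel k SRel.rel
  have hy : Ygen k i j ^ 2 = 0 := by
    simpa [Ygen] using RingQuot.mkAlgHom_rel k (MatRel.rel2 (A := k) (i := i) (j := j))
  have hxy : Xgen k i j ^ i * Ygen k i j + Ygen k i j * Xgen k i j ^ j = 1 := by
    simpa [Xgen, Ygen] using RingQuot.mkAlgHom_rel k (MatRel.rel1 (A := k) (i := i) (j := j))
  refine nonempty_algEquiv_matrix (i := i) (j := j) (a := a) (b := b) (x := π (Xgen k i j))
    (y := π (Ygen k i j)) ?_ ?_ ?_ ?_
  · rw [map_add, map_sub, map_pow, map_smul, AlgHom.commutes, map_zero, pow_two,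
      Algebra.algebraMap_eq_smul_one] at hx
    rw [← sub_eq_zero, ← hx]
    abel
  · rw [← map_mul, ← pow_two, hy, map_zero]
  · rw [← map_pow, ← map_pow, ← map_mul, ← map_mul, ← map_add, hxy, map_one]
  · rw [← Set.image_pair, ← AlgHom.map_adjoin, adjoin_Xgen_Ygen, Algebra.map_top,
      AlgHom.range_eq_top]
    exact RingQuot.mkAlgHom_surjective k _
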